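/- arXiv:1802.01793 — 10 statements merged into one kernel-verified Lean document; each statement's English description precedes it below -/
import Mathlib

section
/- For every integer j and every natural number k, s_k(j² − 2) = r_k(j) · s_k(j). -/
/-!
The product `p_k = r_k(j) s_k(j)` satisfies the recurrence `p_{k+2} = (j² - 2) p_{k+1} - p_k`
that defines `s_k(j² - 2)`, with the same initial values. Expanding `p_{k+2}` by the two recurrences,
this amounts to `j (r_{k+1} s_k + r_k s_{k+1}) = 2 (r_{k+1} s_{k+1} + r_k s_k)`, which is
`r_s_orthogonal`.
-/

/-- The sequence `s_k(n)`: `s_0 = 1`, `s_1 = n + 1`, `s_{k+2} = n·s_{k+1} − s_k`. -/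
def s (n : ℤ) : ℕ → ℤ
  | 0 => 1
  | 1 => n + 1
  | k + 2 => n * s n (k + 1) - s n k

/-- The sequence `r_k(n)`: `r_0 = 1`, `r_1 = n − 1`, `r_{k+2} = n·r_{k+1} − r_k`. -/
def r (n : ℤ) : ℕ → ℤ
  | 0 => 1
  | 1 => n - 1
  | k + 2 => n * r n (k + 1) - r n k

/-- Dilated Chebyshev polynomials of the first kind: `T_0 = 2`, `T_1 = n`. -/
def T (n : ℤ) : ℕ → ℤ
  | 0 => 2
  | 1 => n
  | k + 2 => n * T n (k + 1) - T n k

/-- Dilated Chebyshev polynomials of the second kind: `U_0 = 1`, `U_1 = n`. -/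
def U (n : ℤ) : ℕ → ℤ
  | 0 => 1
  | 1 => n
  | k + 2 => n * U n (k + 1) - U n k

/-- The polar form of the invariant quadratic form `x² - j x y + y²` of the recurrence
`x_{k+2} = j x_{k+1} - x_k` is constant along pairs of solutions; for `r` and `s` it vanishes. -/
theorem r_s_orthogonal (j : ℤ) (k : ℕ) :
    j * (r j (k + 1) * s j k + r j k * s j (k + 1)) =
      2 * (r j (k + 1) * s j (k + 1) + r j k * s j k) := by
  induction k with
  | zero => simp only [r, s]; ring
  | succ k ih =>
    simp only [r, s] at ih ⊢
    linear_combination ih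

theorem s_factorization_T2 (j : ℤ) (k : ℕ) :
    s (j ^ 2 - 2) k = r j k * s j k := by
  induction k using Nat.twoStepInduction with
  | zero => simp [r, s]
  | one => simp only [r, s]; ring
  | more k h0 h1 =>
    have h := r_s_orthogonal j k
    rw [s, h0, h1, r, s]
    linear_combination h
end

section
/- For every integer j and all natural numbers i, k, the symmetric identity s_i(j) · s_k(T_{2i+1}(j)) = s_k(j) · s_i(T_{2k+1}(j)) holds. -/
/-- The extension of `k ↦ s_k(j)` to integer indices, written as `S_z(j) + S_{z-1}(j)` with Mathlib's
rescaled Chebyshev polynomials of the second kind `S`. -/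
noncomputable def sInt (j z : ℤ) : ℤ :=
  (Polynomial.Chebyshev.S ℤ z).eval j + (Polynomial.Chebyshev.S ℤ (z - 1)).eval j

lemma sInt_add_two (j z : ℤ) : sInt j (z + 2) = j * sInt j (z + 1) - sInt j z := by
  have h1 := congrArg (Polynomial.eval j) (Polynomial.Chebyshev.S_add_two ℤ z)
  have h2 := congrArg (Polynomial.eval j) (Polynomial.Chebyshev.S_add_two ℤ (z - 1))
  rw [show z - 1 + 2 = z + 2 - 1 by ring, show z - 1 + 1 = z + 1 - 1 by ring] at h2
  simp only [Polynomial.eval_sub, Polynomial.eval_mul, Polynomial.eval_X] at h1 h2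
  simp only [sInt]
  linear_combination h1 + h2

lemma sInt_reflect (j z : ℤ) : sInt j (-z - 1) = -sInt j z := by
  have h1 := congrArg (Polynomial.eval j) (Polynomial.Chebyshev.S_neg_sub_one ℤ z)
  have h2 := congrArg (Polynomial.eval j) (Polynomial.Chebyshev.S_neg_sub_two ℤ z)
  rw [show -z - 2 = -z - 1 - 1 by ring] at h2
  simp only [Polynomial.eval_neg] at h1 h2
  simp only [sInt]
  linear_combination h1 + h2

lemma sInt_natCast (j : ℤ) (k : ℕ) : sInt j k = s j k := by
  induction k using Nat.twoStepInduction with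
  | zero => simp [sInt, s]
  | one => simp [sInt, s]
  | more k h0 h1 =>
    push_cast at h1 ⊢
    rw [sInt_add_two, h0, h1, s]

/-- The analogue of `cos (z + m) + cos (z - m) = 2 cos m cos z` for every two-sided solution of the
Chebyshev recurrence. -/
lemma add_shift_eq_T_mul (j : ℤ) (f : ℤ → ℤ) (hf : ∀ z, f (z + 2) = j * f (z + 1) - f z)
    (z : ℤ) (m : ℕ) : f (z + m) + f (z - m) = T j m * f z := by
  induction m using Nat.twoStepInduction with
  | zero => simp [T]; ring
  | one =>
    have h := hf (z - 1)
    rw [show z - 1 + 2 = z + 1 by ring, show z - 1 + 1 = z by ring] at h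
    simp only [T, Nat.cast_one]
    linear_combination h
  | more m h0 h1 =>
    have ha := hf (z + m)
    have hb := hf (z - m - 2)
    rw [show z - m - 2 + 2 = z - m by ring, show z - m - 2 + 1 = z - (m + 1) by ring,
      show z - m - 2 = z - (m + 2) by ring] at hb
    rw [show z + m + 2 = z + (m + 2) by ring, show z + m + 1 = z + (m + 1) by ring] at ha
    push_cast at h1 ⊢
    rw [T]
    linear_combination ha + hb + j * h1 - h0

lemma s_mul_s_T (j : ℤ) (i k : ℕ) :
    s j i * s (T j (2 * i + 1)) k = sInt j (k * (2 * i + 1) + i) := by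
  induction k using Nat.twoStepInduction with
  | zero => simp [s, sInt_natCast]
  | one =>
    have h := add_shift_eq_T_mul j (sInt j) (sInt_add_two j) i (2 * i + 1)
    have hr := sInt_reflect j i
    push_cast at h ⊢
    rw [show (i : ℤ) - (2 * i + 1) = -i - 1 by ring, hr, sInt_natCast] at h
    rw [show (1 : ℤ) * (2 * i + 1) + i = i + (2 * i + 1) by ring, s]
    linear_combination -h
  | more k h0 h1 =>
    have h := add_shift_eq_T_mul j (sInt j) (sInt_add_two j) ((k + 1) * (2 * i + 1) + i) (2 * i + 1)
    push_cast at h h1 ⊢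
    rw [show ((k : ℤ) + 1) * (2 * i + 1) + i + (2 * i + 1) = (k + 2) * (2 * i + 1) + i by ring,
      show ((k : ℤ) + 1) * (2 * i + 1) + i - (2 * i + 1) = k * (2 * i + 1) + i by ring] at h
    rw [s]
    linear_combination -h + T j (2 * i + 1) * h1 - h0

theorem s_symmetric_identity (j : ℤ) (i k : ℕ) :
    s j i * s (T j (2 * i + 1)) k = s j k * s (T j (2 * k + 1)) i := by
  rw [s_mul_s_T, s_mul_s_T]
  congr 1
  ring
end

section
/- Let p be a prime, let j ≥ 3 be an integer, and set n = T_p(j). If p = 2, then s_k(n) is not prime for any k ≥ 1. If p is odd, then s_k(n) is not prime for any k ≥ 1 with k ≠ (p − 1)/2. -/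
lemma s_add_two (n : ℤ) (k : ℕ) : s n (k + 2) = n * s n (k + 1) - s n k := by rw [s]

lemma r_add_two (n : ℤ) (k : ℕ) : r n (k + 2) = n * r n (k + 1) - r n k := by rw [r]

lemma T_add_two (n : ℤ) (k : ℕ) : T n (k + 2) = n * T n (k + 1) - T n k := by rw [T]

lemma s_succ_sub (n : ℤ) (m : ℕ) : s n (m + 1) - s n m = T n (m + 1) := by
  induction m using Nat.twoStepInduction with
  | zero => simp [s, T]
  | one => simp [s, T]; ring
  | more m h0 h1 =>
    rw [T_add_two n (m + 1), ← h1, ← h0, s_add_two n (m + 1), s_add_two n m]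
    ring

/-- In terms of `x`: `T n c` acts on the sequence as the sum of the shifts by `c` and `-c`. -/
lemma T_mul_s (n : ℤ) (c m : ℕ) : T n c * s n (m + c) = s n (m + 2 * c) + s n m := by
  induction c using Nat.twoStepInduction generalizing m with
  | zero => simp [T]; ring
  | one => simp only [T, mul_one]; rw [s_add_two]; ring
  | more c h0 h1 =>
    have e0 := h0 (m + 2)
    have e1 := h1 (m + 1)
    have e2 := s_add_two n (m + 2 * c + 2)
    have e3 := s_add_two n m
    rw [show m + 2 + c = m + (c + 2) by ring, show m + 2 + 2 * c = m + 2 * c + 2 by ring] at e0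
    rw [show m + 1 + (c + 1) = m + (c + 2) by ring,
      show m + 1 + 2 * (c + 1) = m + 2 * c + 2 + 1 by ring] at e1
    rw [T_add_two, show m + 2 * (c + 2) = m + 2 * c + 2 + 2 by ring]
    linear_combination n * e1 - e0 - e2 - e3

/-- Modulo `s n k` the sequence `s n` has period `2k + 1`. -/
lemma s_mul_T (n : ℤ) (k m : ℕ) : s n k * T n (m + k + 1) = s n (m + 2 * k + 1) - s n m := by
  induction k using Nat.twoStepInduction generalizing m with
  | zero => simp [s, s_succ_sub]
  | one =>
    have h0 := s_succ_sub n m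
    have h1 := s_succ_sub n (m + 1)
    have h2 := s_succ_sub n (m + 2)
    have h3 := T_add_two n (m + 1)
    rw [show m + 2 * 1 + 1 = m + 2 + 1 by ring, show s n 1 = n + 1 by rw [s]]
    simp only [add_assoc, Nat.reduceAdd] at *
    linear_combination -h0 - h1 - h2 - h3
  | more k h0 h1 =>
    have e0 := h0 (m + 2)
    have e1 := h1 (m + 1)
    have e2 := s_add_two n (m + 2 * k + 3)
    have e3 := s_add_two n m
    rw [show m + 2 + k + 1 = m + (k + 2) + 1 by ring,
      show m + 2 + 2 * k + 1 = m + 2 * k + 3 by ring] at e0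
    rw [show m + 1 + (k + 1) + 1 = m + (k + 2) + 1 by ring,
      show m + 1 + 2 * (k + 1) + 1 = m + 2 * k + 3 + 1 by ring] at e1
    rw [s_add_two n k, show m + 2 * (k + 2) + 1 = m + 2 * k + 3 + 2 by ring]
    linear_combination n * e1 - e0 - e2 + e3

/-- The index on the right is `((2a+1)(2b+1) - 1) / 2`. -/
lemma s_mul_s_T_s2 (n : ℤ) (a b : ℕ) :
    s n a * s (T n (2 * a + 1)) b = s n (2 * a * b + a + b) := by
  induction b using Nat.twoStepInduction with
  | zero => simp [s]
  | one =>
    have h := s_mul_T n a a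
    rw [show a + a + 1 = 2 * a + 1 by ring] at h
    rw [show 2 * a * 1 + a + 1 = a + 2 * a + 1 by ring]
    simp only [s]
    linear_combination h
  | more b h0 h1 =>
    have h := T_mul_s n (2 * a + 1) (2 * a * b + a + b)
    rw [show 2 * a * b + a + b + (2 * a + 1) = 2 * a * (b + 1) + a + (b + 1) by ring,
      show 2 * a * b + a + b + 2 * (2 * a + 1) = 2 * a * (b + 2) + a + (b + 2) by ring] at h
    rw [s_add_two]
    linear_combination T n (2 * a + 1) * h1 - h0 + h

lemma s_T_two (n : ℤ) (k : ℕ) : s (T n 2) k = s n k * r n k := by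
  -- A bilinear form in consecutive terms that is preserved by the recurrence and starts at `0`.
  have inv : ∀ k, n * (s n (k + 1) * r n k + s n k * r n (k + 1))
      = 2 * (s n (k + 1) * r n (k + 1) + s n k * r n k) := by
    intro k
    induction k with
    | zero => simp [s, r]; ring
    | succ k ih =>
      rw [s_add_two, r_add_two]
      linear_combination ih
  have hT : T n 2 = n ^ 2 - 2 := by simp [T]; ring
  induction k using Nat.twoStepInduction with
  | zero => simp [s, r]
  | one => simp only [s, r, hT]; ring
  | more k h0 h1 =>
    rw [s_add_two (T n 2), h0, h1, hT, s_add_two, r_add_two]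
    linear_combination inv k

lemma s_growth {n : ℤ} (hn : 3 ≤ n) (k : ℕ) : 0 < s n k ∧ (n - 1) * s n k ≤ s n (k + 1) := by
  induction k with
  | zero => simp [s]; linarith
  | succ k ih =>
    obtain ⟨h0, h1⟩ := ih
    have : s n k ≤ s n (k + 1) := by nlinarith
    exact ⟨by linarith, by rw [s_add_two]; linarith⟩

lemma s_strictMono {n : ℤ} (hn : 3 ≤ n) : StrictMono (s n) :=
  strictMono_nat_of_lt_succ fun k => by
    have := s_growth hn k
    nlinarith

lemma two_le_r {n : ℤ} (hn : 3 ≤ n) {k : ℕ} (hk : 1 ≤ k) : 2 ≤ r n k := by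
  have : ∀ k, 1 ≤ r n k ∧ r n k + 1 ≤ r n (k + 1) := by
    intro k
    induction k with
    | zero => simp [r]; linarith
    | succ k ih => exact ⟨by linarith, by rw [r_add_two]; nlinarith⟩
  obtain ⟨k, rfl⟩ := Nat.exists_eq_add_of_le' hk
  linarith [this k]

lemma T_strictMono {n : ℤ} (hn : 3 ≤ n) : StrictMono (T n) := by
  have : ∀ k, 0 < T n k ∧ T n k < T n (k + 1) := by
    intro k
    induction k with
    | zero => simp [T]; linarith
    | succ k ih => exact ⟨by linarith, by rw [T_add_two]; nlinarith⟩
  exact strictMono_nat_of_lt_succ fun k => (this k).2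

lemma s_lt_s {m n : ℤ} (hm : 3 ≤ m) (hmn : m < n) {k : ℕ} (hk : 1 ≤ k) : s m k < s n k := by
  induction k, hk using Nat.le_induction with
  | base => simp [s]; exact hmn
  | succ k hk ih =>
    obtain ⟨l, rfl⟩ := Nat.exists_eq_add_of_le' hk
    have h1 := s_growth (hm.trans hmn.le) (l + 1)
    have h2 := s_growth hm l
    have h3 := s_growth hm (l + 1)
    have h4 := s_add_two m l
    rw [add_assoc] at *
    simp only [Nat.reduceAdd] at *
    nlinarith

lemma dvd_of_s_dvd_s {n : ℤ} (hn : 3 ≤ n) (k q : ℕ) (h : s n k ∣ s n q) :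
    2 * k + 1 ∣ 2 * q + 1 := by
  have small : ∀ i < k, ¬ s n k ∣ s n i := fun i hi hd =>
    (s_strictMono hn hi).not_ge (Int.le_of_dvd (s_growth hn i).1 hd)
  induction q using Nat.strong_induction_on with
  | _ q ih =>
    rcases lt_trichotomy q k with hq | rfl | hq
    · exact absurd h (small q hq)
    · exact dvd_rfl
    · by_cases hq2 : q ≤ 2 * k
      · -- Reflecting `q` about `k` changes `s n q` only by a sign modulo `s n k`.
        have e := T_mul_s n (q - k) (2 * k - q)
        rw [show 2 * k - q + (q - k) = k by omega,
          show 2 * k - q + 2 * (q - k) = q by omega] at e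
        refine absurd ?_ (small (2 * k - q) (by omega))
        rw [← dvd_add_right h, ← e]
        exact dvd_mul_left _ _
      · obtain ⟨m, rfl⟩ := Nat.exists_eq_add_of_le' (show 2 * k + 1 ≤ q by omega)
        have e := s_mul_T n k m
        have hm : s n k ∣ s n m := by
          rw [← dvd_sub_right h, add_assoc .. |>.symm, ← e]
          exact dvd_mul_right _ _
        have := ih m (by omega) hm
        rw [show 2 * (m + (2 * k + 1)) + 1 = 2 * m + 1 + (2 * k + 1) * 2 by ring]
        exact dvd_add this (dvd_mul_right _ _)

theorem s_composite_for_chebyshev_values (p : ℕ) (hp : p.Prime) (j : ℤ) (hj : 3 ≤ j) :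
    (p = 2 → ∀ k : ℕ, 1 ≤ k → ¬ Prime (s (T j p) k)) ∧
    (Odd p → ∀ k : ℕ, 1 ≤ k → k ≠ (p - 1) / 2 → ¬ Prime (s (T j p) k)) := by
  constructor
  · rintro rfl k hk hP
    rw [s_T_two] at hP
    have hs : s j 0 < s j k := s_strictMono hj hk
    have hr := two_le_r hj hk
    have h0 : s j 0 = 1 := by rw [s]
    rcases hP.irreducible.isUnit_or_isUnit rfl with h | h <;>
      rcases Int.isUnit_iff.mp h with h | h <;> linarith
  · rintro ⟨q, rfl⟩ k hk hkq hP
    have key : s j q * s (T j (2 * q + 1)) k = s j k * s (T j (2 * k + 1)) q := by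
      rw [s_mul_s_T_s2, s_mul_s_T_s2]
      congr 1
      ring
    have hjn : j < T j (2 * q + 1) := by
      have h1 : T j 1 = j := by rw [T]
      have := T_strictMono hj hp.one_lt
      rwa [h1] at this
    have hnd : ¬ s (T j (2 * q + 1)) k ∣ s j k := fun hd =>
      (s_lt_s hj hjn hk).not_ge (Int.le_of_dvd (s_growth hj k).1 hd)
    obtain ⟨t, ht⟩ := (hP.dvd_or_dvd ⟨s j q, by rw [← key]; ring⟩).resolve_left hnd
    have hq : s j q = s j k * t := by
      apply mul_right_cancel₀ hP.ne_zero
      rw [key, ht]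
      ring
    rcases (Nat.dvd_prime hp).mp (dvd_of_s_dvd_s hj k q ⟨t, hq⟩) with h | h <;> omega
end

section
/- Let ℓ ≥ 2 be an integer and set j = 2(ℓ² − 1). Then for every natural number k, with δ_k = (−1)^⌊(k+1)/2⌋: (ℓ² − 1)·r_k(j² − 2) = ℓ²·r_k(j)² − 1, and moreover (ℓ + 1) divides ℓ·r_k(j) + δ_k and (ℓ − 1) divides ℓ·r_k(j) − δ_k, so that r_k(j² − 2) is the product of the two integers (ℓ·r_k(j) + δ_k)/(ℓ + 1) and (ℓ·r_k(j) − δ_k)/(ℓ − 1). -/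
theorem r_invariant (n : ℤ) (k : ℕ) :
    r n k ^ 2 + r n (k + 1) ^ 2 - n * r n k * r n (k + 1) = 2 - n := by
  induction k with
  | zero => simp only [r]; ring
  | succ k ih =>
    rw [show r n (k + 1 + 1) = n * r n (k + 1) - r n k from rfl]
    linear_combination ih

theorem r_square_identity (ℓ : ℤ) (k : ℕ) :
    (ℓ ^ 2 - 1) * r ((2 * (ℓ ^ 2 - 1)) ^ 2 - 2) k
      = ℓ ^ 2 * (r (2 * (ℓ ^ 2 - 1)) k) ^ 2 - 1 := by
  induction k using Nat.twoStepInduction with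
  | zero => simp only [r]; ring
  | one => simp only [r]; ring
  | more k ih₀ ih₁ =>
    have hinv := r_invariant (2 * (ℓ ^ 2 - 1)) k
    simp only [r]
    linear_combination ((2 * (ℓ ^ 2 - 1)) ^ 2 - 2) * ih₁ - ih₀ - 2 * ℓ ^ 2 * hinv

/-- Modulo `n` the sequence `r_k(n)` is `1, −1, −1, 1, …`, of period four. -/
theorem dvd_r_sub_sign (n : ℤ) (k : ℕ) : n ∣ r n k - (-1 : ℤ) ^ ((k + 1) / 2) := by
  induction k using Nat.twoStepInduction with
  | zero => simp [r]
  | one => simp [r]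
  | more k ih₀ _ =>
    obtain ⟨c, hc⟩ := ih₀
    rw [show (k + 2 + 1) / 2 = (k + 1) / 2 + 1 by omega, pow_succ]
    refine ⟨r n (k + 1) - c, ?_⟩
    simp only [r]
    linear_combination -hc

theorem r_factorization_special (ℓ : ℤ) (hℓ : 2 ≤ ℓ) (k : ℕ) :
    (ℓ ^ 2 - 1) * r ((2 * (ℓ ^ 2 - 1)) ^ 2 - 2) k
        = ℓ ^ 2 * (r (2 * (ℓ ^ 2 - 1)) k) ^ 2 - 1 ∧
    (ℓ + 1) ∣ ℓ * r (2 * (ℓ ^ 2 - 1)) k + (-1 : ℤ) ^ ((k + 1) / 2) ∧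
    (ℓ - 1) ∣ ℓ * r (2 * (ℓ ^ 2 - 1)) k - (-1 : ℤ) ^ ((k + 1) / 2) ∧
    r ((2 * (ℓ ^ 2 - 1)) ^ 2 - 2) k
        = ((ℓ * r (2 * (ℓ ^ 2 - 1)) k + (-1 : ℤ) ^ ((k + 1) / 2)) / (ℓ + 1))
          * ((ℓ * r (2 * (ℓ ^ 2 - 1)) k - (-1 : ℤ) ^ ((k + 1) / 2)) / (ℓ - 1)) := by
  have hid := r_square_identity ℓ k
  obtain ⟨c, hc⟩ := dvd_r_sub_sign (2 * (ℓ ^ 2 - 1)) k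
  have hsq : ((-1 : ℤ) ^ ((k + 1) / 2)) ^ 2 = 1 := by
    rw [← pow_mul, mul_comm, pow_mul]; simp
  generalize (-1 : ℤ) ^ ((k + 1) / 2) = d at *
  generalize r (2 * (ℓ ^ 2 - 1)) k = a at *
  have hplus : ℓ * a + d = (ℓ + 1) * (2 * ℓ * (ℓ - 1) * c + d) := by
    linear_combination ℓ * hc
  have hminus : ℓ * a - d = (ℓ - 1) * (2 * ℓ * (ℓ + 1) * c + d) := by
    linear_combination ℓ * hc
  refine ⟨hid, ⟨_, hplus⟩, ⟨_, hminus⟩, ?_⟩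
  have hne : ℓ ^ 2 - 1 ≠ 0 := by nlinarith
  rw [hplus, hminus, Int.mul_ediv_cancel_left _ (by omega), Int.mul_ediv_cancel_left _ (by omega)]
  apply mul_left_cancel₀ hne
  rw [hid]
  linear_combination (ℓ * a - d) * hplus + (ℓ + 1) * (2 * ℓ * (ℓ - 1) * c + d) * hminus + hsq
end

section
/- Let p be a prime. If p = 2 and n = T_2(j) where j = 2(ℓ² − 1) for some integer ℓ ≥ 2, then r_k(n) is not prime for any k ≥ 1. If p is odd and n = T_p(j) for some integer j ≥ 3, then r_k(n) is not prime for any k ≥ 1 with k ≠ (p − 1)/2. -/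
/-! ### Power formulas -/

lemma exists_pow_param (j : ℤ) (hj : 3 ≤ j) :
    ∃ z w : ℝ, z * w = 1 ∧ 0 < z ∧ 0 < w ∧ (j : ℝ) = z ^ 2 + w ^ 2 := by
  have hj' : (3 : ℝ) ≤ j := by exact_mod_cast hj
  -- `z` and `w` are determined by `z + w = √(j + 2)` and `z - w = √(j - 2)`.
  have h1 := Real.sq_sqrt (show (0 : ℝ) ≤ j + 2 by linarith)
  have h2 := Real.sq_sqrt (show (0 : ℝ) ≤ j - 2 by linarith)
  have h3 : √((j : ℝ) - 2) < √((j : ℝ) + 2) :=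
    Real.sqrt_lt_sqrt (by linarith) (by linarith)
  have h4 := Real.sqrt_nonneg ((j : ℝ) - 2)
  refine ⟨(√((j : ℝ) + 2) + √((j : ℝ) - 2)) / 2, (√((j : ℝ) + 2) - √((j : ℝ) - 2)) / 2,
    ?_, by linarith, by linarith, ?_⟩
  · linear_combination h1 / 4 - h2 / 4
  · linear_combination -h1 / 2 - h2 / 2

lemma T_eq_pow {n : ℤ} {z w : ℝ} (h : z * w = 1) (hn : (n : ℝ) = z ^ 2 + w ^ 2) (k : ℕ) :
    (T n k : ℝ) = z ^ (2 * k) + w ^ (2 * k) := by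
  induction k using Nat.twoStepInduction with
  | zero => norm_num [T]
  | one => simpa [T] using hn
  | more k ih1 ih2 =>
    simp only [T]
    push_cast
    rw [ih1, ih2, hn]
    linear_combination (z ^ (2 * k) + w ^ (2 * k)) * (z * w + 1) * h

lemma r_mul_eq_pow {n : ℤ} {z w : ℝ} (h : z * w = 1) (hn : (n : ℝ) = z ^ 2 + w ^ 2) (k : ℕ) :
    (r n k : ℝ) * (z + w) = z ^ (2 * k + 1) + w ^ (2 * k + 1) := by
  induction k using Nat.twoStepInduction with
  | zero => norm_num [r]
  | one =>
    simp only [r]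
    push_cast
    rw [hn]
    linear_combination (z + w) * h
  | more k ih1 ih2 =>
    simp only [r]
    push_cast
    rw [hn]
    linear_combination (z ^ 2 + w ^ 2) * ih2 - ih1
      + (z ^ (2 * k + 1) + w ^ (2 * k + 1)) * (z * w + 1) * h

/-! ### Identities between values of `r` and `T` -/

lemma r_add_two_mul {j : ℤ} (hj : 3 ≤ j) (i d : ℕ) :
    r j (i + 2 * d) + r j i = r j (i + d) * T j d := by
  obtain ⟨z, w, h, hz, hw, hn⟩ := exists_pow_param j hj
  have h0 : z + w ≠ 0 := by positivity
  have hd : z ^ (2 * d) * w ^ (2 * d) = 1 := by rw [← mul_pow, h, one_pow]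
  have e1 := r_mul_eq_pow h hn (i + 2 * d)
  have e2 := r_mul_eq_pow h hn i
  have e3 := r_mul_eq_pow h hn (i + d)
  have e4 := T_eq_pow h hn d
  suffices (r j (i + 2 * d) + r j i : ℝ) = r j (i + d) * T j d by exact_mod_cast this
  apply mul_right_cancel₀ h0
  rw [e4]
  linear_combination e1 + e2 - (z ^ (2 * d) + w ^ (2 * d)) * e3
    - (z ^ (2 * i + 1) + w ^ (2 * i + 1)) * hd

/-- The analogue of `r_add_two_mul` for a shift past the symmetry `r_{-1-i} = r_i`. -/
lemma r_reflect {j : ℤ} (hj : 3 ≤ j) (k i : ℕ) :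
    r j (2 * k + 1 + i) + r j i = r j k * T j (k + 1 + i) := by
  obtain ⟨z, w, h, hz, hw, hn⟩ := exists_pow_param j hj
  have h0 : z + w ≠ 0 := by positivity
  have hd : z ^ (2 * k + 1) * w ^ (2 * k + 1) = 1 := by rw [← mul_pow, h, one_pow]
  have e1 := r_mul_eq_pow h hn (2 * k + 1 + i)
  have e2 := r_mul_eq_pow h hn i
  have e3 := r_mul_eq_pow h hn k
  have e4 := T_eq_pow h hn (k + 1 + i)
  suffices (r j (2 * k + 1 + i) + r j i : ℝ) = r j k * T j (k + 1 + i) by exact_mod_cast this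
  apply mul_right_cancel₀ h0
  rw [e4]
  linear_combination e1 + e2 - (z ^ (2 * (k + 1 + i)) + w ^ (2 * (k + 1 + i))) * e3
    - (z ^ (2 * i + 1) + w ^ (2 * i + 1)) * hd

lemma r_T_mul {j : ℤ} (hj : 3 ≤ j) (k q : ℕ) :
    r (T j (2 * q + 1)) k * r j q = r (T j (2 * k + 1)) q * r j k := by
  obtain ⟨z, w, h, hz, hw, hn⟩ := exists_pow_param j hj
  have h0 : z + w ≠ 0 := by positivity
  have hp : ∀ a : ℕ, z ^ a * w ^ a = 1 := fun a => by rw [← mul_pow, h, one_pow]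
  have hT : ∀ a : ℕ, (T j a : ℝ) = (z ^ a) ^ 2 + (w ^ a) ^ 2 := fun a => by
    rw [T_eq_pow h hn a]; ring
  have e1 := r_mul_eq_pow (hp (2 * q + 1)) (hT (2 * q + 1)) k
  have e2 := r_mul_eq_pow (hp (2 * k + 1)) (hT (2 * k + 1)) q
  have e3 := r_mul_eq_pow h hn k
  have e4 := r_mul_eq_pow h hn q
  rw [← e4, ← pow_mul, ← pow_mul] at e1
  rw [← e3, ← pow_mul, ← pow_mul, mul_comm (2 * k + 1)] at e2
  suffices (r (T j (2 * q + 1)) k * r j q : ℝ) = r (T j (2 * k + 1)) q * r j k by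
    exact_mod_cast this
  apply mul_right_cancel₀ h0
  linear_combination e1 - e2

lemma r_T_two {ℓ : ℤ} (hℓ : 2 ≤ ℓ) (k : ℕ) :
    r (T (2 * (ℓ ^ 2 - 1)) 2) k * (ℓ ^ 2 - 1)
      = (ℓ * r (2 * (ℓ ^ 2 - 1)) k - 1) * (ℓ * r (2 * (ℓ ^ 2 - 1)) k + 1) := by
  obtain ⟨j, hj⟩ : ∃ j, j = 2 * (ℓ ^ 2 - 1) := ⟨_, rfl⟩
  rw [← hj]
  obtain ⟨z, w, h, hz, hw, hn⟩ := exists_pow_param j (by nlinarith)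
  have hp : z ^ 2 * w ^ 2 = 1 := by rw [← mul_pow, h, one_pow]
  have hT : (T j 2 : ℝ) = (z ^ 2) ^ 2 + (w ^ 2) ^ 2 := by
    rw [T_eq_pow h hn 2]; ring
  have e1 := r_mul_eq_pow hp hT k
  have e2 := r_mul_eq_pow h hn k
  have hm : z ^ (2 * k + 1) * w ^ (2 * k + 1) = 1 := by rw [← mul_pow, h, one_pow]
  have hj' : z ^ 2 + w ^ 2 = 2 * ((ℓ : ℝ) ^ 2 - 1) := by rw [← hn, hj]; push_cast; ring
  have hs : (z + w) ^ 2 = 2 * (ℓ : ℝ) ^ 2 := by linear_combination hj' + 2 * h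
  have e3 : ((r j k : ℝ) * (z + w)) ^ 2 = (z ^ (2 * k + 1) + w ^ (2 * k + 1)) ^ 2 := by rw [e2]
  rw [hj', ← pow_mul, ← pow_mul, mul_comm 2 (2 * k + 1), pow_mul, pow_mul] at e1
  rw [mul_pow, hs] at e3
  suffices (r (T j 2) k * (ℓ ^ 2 - 1) : ℝ) = (ℓ * r j k - 1) * (ℓ * r j k + 1) by
    exact_mod_cast this
  linear_combination e1 / 2 - e3 / 2 - hm

/-! ### Growth and divisibility -/

lemma r_pos_and_lt {j : ℤ} (hj : 3 ≤ j) (k : ℕ) : 0 < r j k ∧ r j k < r j (k + 1) := by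
  induction k with
  | zero => simp only [r]; omega
  | succ k ih =>
    refine ⟨by omega, ?_⟩
    simp only [r]
    nlinarith

lemma r_strictMono {j : ℤ} (hj : 3 ≤ j) : StrictMono (r j) :=
  strictMono_nat_of_lt_succ fun k => (r_pos_and_lt hj k).2

lemma r_lt_r_of_lt {j n : ℤ} (hj : 3 ≤ j) (hn : j < n) (k : ℕ) : r j (k + 1) < r n (k + 1) := by
  -- The increments `r_{k+1} - r_k` are compared along with the values.
  suffices r j (k + 1) < r n (k + 1) ∧ r j (k + 1) - r j k ≤ r n (k + 1) - r n k from this.1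
  induction k with
  | zero => simp only [r]; omega
  | succ k ih =>
    have := (r_pos_and_lt hj (k + 1)).1
    have h : (j - 2) * r j (k + 1) ≤ (n - 2) * r n (k + 1) :=
      mul_le_mul (by omega) ih.1.le this.le (by omega)
    have hi : r j (k + 1 + 1) - r j (k + 1) ≤ r n (k + 1 + 1) - r n (k + 1) := by
      simp only [r]
      linarith [ih.2]
    exact ⟨by linarith [ih.1], hi⟩

lemma T_strictMono_s5 {j : ℤ} (hj : 3 ≤ j) : StrictMono (T j) := by
  suffices ∀ k, 0 < T j k ∧ T j k < T j (k + 1) from strictMono_nat_of_lt_succ fun k => (this k).2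
  intro k
  induction k with
  | zero => simp only [T]; omega
  | succ k ih =>
    refine ⟨by omega, ?_⟩
    simp only [T]
    nlinarith

/-- Modulo `r_k`, the sequence `r` is, up to sign, `(2k+1)`-periodic and symmetric about `k`, so an
index `q` can be brought below or to `k`, where only `k` itself gives a multiple of `r_k`. -/
lemma dvd_of_r_dvd {j : ℤ} (hj : 3 ≤ j) (k q : ℕ) (h : r j k ∣ r j q) :
    2 * k + 1 ∣ 2 * q + 1 := by
  induction q using Nat.strong_induction_on with
  | _ q ih =>
    rcases lt_trichotomy q k with hq | rfl | hq
    · have := Int.le_of_dvd (r_pos_and_lt hj q).1 h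
      exact absurd (r_strictMono hj hq) (by omega)
    · exact dvd_rfl
    · rcases le_or_gt q (2 * k) with hq2 | hq2
      · have e := r_add_two_mul hj (2 * k - q) (q - k)
        rw [show 2 * k - q + 2 * (q - k) = q by omega,
          show 2 * k - q + (q - k) = k by omega] at e
        have hd := ih (2 * k - q) (by omega)
          ((dvd_add_right h).1 (e ▸ Dvd.intro _ rfl))
        have hs : 2 * k + 1 ∣ (2 * q + 1) + (2 * (2 * k - q) + 1) := ⟨2, by omega⟩
        exact (Nat.dvd_add_left hd).1 hs
      · obtain ⟨i, rfl⟩ := Nat.exists_eq_add_of_lt hq2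
        have e := r_reflect hj k i
        rw [show 2 * k + 1 + i = 2 * k + i + 1 by omega] at e
        have hd := ih i (by omega) ((dvd_add_right h).1 (e ▸ Dvd.intro _ rfl))
        rw [show 2 * (2 * k + i + 1) + 1 = 2 * (2 * k + 1) + (2 * i + 1) by ring]
        exact dvd_add (Dvd.intro_left _ rfl) hd

theorem r_composite_for_chebyshev_values (p : ℕ) (hp : p.Prime) :
    (p = 2 → ∀ ℓ : ℤ, 2 ≤ ℓ → ∀ k : ℕ, 1 ≤ k →
      ¬ Prime (r (T (2 * (ℓ ^ 2 - 1)) 2) k)) ∧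
    (Odd p → ∀ j : ℤ, 3 ≤ j → ∀ k : ℕ, 1 ≤ k → k ≠ (p - 1) / 2 →
      ¬ Prime (r (T j p) k)) := by
  refine ⟨fun _ ℓ hℓ k hk hP => ?_, fun hodd j hj k hk hkp hP => ?_⟩
  · have e := r_T_two hℓ k
    have hj : 3 ≤ 2 * (ℓ ^ 2 - 1) := by nlinarith
    have hR : 2 * (ℓ ^ 2 - 1) - 1 ≤ r (2 * (ℓ ^ 2 - 1)) k := (r_strictMono hj).monotone hk
    set P := r (T (2 * (ℓ ^ 2 - 1)) 2) k
    set R := r (2 * (ℓ ^ 2 - 1)) k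
    have hRℓ : ℓ < R := by nlinarith
    have hpos : 0 < ℓ * R - 1 := by nlinarith
    have hlt : ℓ * R + 1 < P := by
      have hc : 0 < ℓ ^ 2 - 1 := by nlinarith
      refine lt_of_mul_lt_mul_right ?_ hc.le
      rw [e, mul_comm]
      exact mul_lt_mul_of_pos_right (by nlinarith) (by linarith)
    rcases hP.dvd_or_dvd (Dvd.intro _ e) with h | h
    · have := Int.le_of_dvd hpos h
      omega
    · have := Int.le_of_dvd (by omega) h
      omega
  · obtain ⟨q, rfl⟩ := hodd
    have hq : k ≠ q := by omega
    have hq0 : q ≠ 0 := by rintro rfl; exact absurd hp (by norm_num)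
    have hjn : j < T j (2 * q + 1) := T_strictMono_s5 hj (show 1 < 2 * q + 1 by omega)
    have e := r_T_mul hj k q
    have hpos := (r_pos_and_lt hj k).1
    rcases hP.dvd_or_dvd (Dvd.intro _ e) with ⟨c, hc⟩ | h
    · have hdvd : r j k ∣ r j q := by
        refine ⟨c, mul_left_cancel₀ hP.ne_zero ?_⟩
        rw [e, hc]
        ring
      rcases (Nat.dvd_prime hp).1 (dvd_of_r_dvd hj k q hdvd) with h | h <;> omega
    · have hle := Int.le_of_dvd hpos h
      obtain ⟨i, rfl⟩ := Nat.exists_eq_add_of_le' hk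
      exact absurd (r_lt_r_of_lt hj hjn i) (by omega)
end

section
/- Let a, b ≥ 3 be odd integers and let k be such that 2k + 1 = a·b. Then for every integer n, s_k(n) = s_{(a−1)/2}(T_b(n)) · s_{(b−1)/2}(n). -/
/-- The product formula `T_j s_{m+j} = s_{m+2j} + s_m`. -/
lemma s_add_two_mul (n : ℤ) (j : ℕ) :
    ∀ m : ℕ, s n (m + 2 * j) = T n j * s n (m + j) - s n m := by
  induction j using Nat.twoStepInduction with
  | zero => intro m; simp only [T, Nat.mul_zero, Nat.add_zero]; ring
  | one => intro m; simp only [T, s]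
  | more j ih0 ih1 =>
    intro m
    have h0 := ih0 (m + 2)
    have h1 := ih1 (m + 1)
    have e4 : s n (m + 2 * (j + 2)) = n * s n (m + 2 * j + 3) - s n (m + 2 * j + 2) := by
      rw [show m + 2 * (j + 2) = (m + 2 * j + 2) + 2 by ring, s]
    have e2 : s n (m + 2) = n * s n (m + 1) - s n m := by rw [s]
    rw [show m + 2 + 2 * j = m + 2 * j + 2 by ring, show m + 2 + j = m + (j + 2) by ring] at h0
    rw [show m + 1 + 2 * (j + 1) = m + 2 * j + 3 by ring,
      show m + 1 + (j + 1) = m + (j + 2) by ring] at h1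
    rw [e4, T]
    linear_combination n * h1 - h0 + e2

/-- The product formula `T_j s_m = s_{m+j} + s_{m-j}` for `j = m + 1 + i > m`, where
`s_{m-j} = s_{-1-i} = -s_i`. -/
lemma s_reflect (n : ℤ) (m : ℕ) :
    ∀ i : ℕ, s n (2 * m + 1 + i) - s n i = T n (m + 1 + i) * s n m := by
  have base : ∀ i : ℕ, s n (i + 1) - s n i = T n (i + 1) := by
    intro i
    induction i using Nat.twoStepInduction with
    | zero => simp [s, T]
    | one => simp only [s, T]; ring
    | more i ih0 ih1 =>
      rw [T, ← ih0, ← ih1, s, s]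
      ring
  induction m using Nat.twoStepInduction with
  | zero =>
    intro i
    rw [show 2 * 0 + 1 + i = i + 1 by ring, base, s, mul_one]
  | one =>
    intro i
    have h := base (i + 1)
    have e3 : s n (i + 3) = n * s n (i + 2) - s n (i + 1) := by rw [s]
    have e2 : s n (i + 2) = n * s n (i + 1) - s n i := by rw [s]
    rw [show 2 * 1 + 1 + i = i + 3 by ring, show 1 + 1 + i = i + 1 + 1 by ring, s]
    linear_combination e3 + (n + 1) * h - e2
  | more m ih0 ih1 =>
    intro i
    have h0 := ih0 (i + 2)
    have h1 := ih1 (i + 1)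
    have e5 : s n (2 * (m + 2) + 1 + i) = n * s n (2 * m + i + 4) - s n (2 * m + i + 3) := by
      rw [show 2 * (m + 2) + 1 + i = (2 * m + i + 3) + 2 by ring, s]
    have e2 : s n (i + 2) = n * s n (i + 1) - s n i := by rw [s]
    rw [show 2 * m + 1 + (i + 2) = 2 * m + i + 3 by ring,
      show m + 1 + (i + 2) = m + 2 + 1 + i by ring] at h0
    rw [show 2 * (m + 1) + 1 + (i + 1) = 2 * m + i + 4 by ring,
      show m + 1 + 1 + (i + 1) = m + 2 + 1 + i by ring] at h1
    rw [e5, show s n (m + 2) = n * s n (m + 1) - s n m by rw [s]]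
    linear_combination n * h1 - h0 - e2

lemma s_mul_add (n : ℤ) (c j : ℕ) :
    s n (j * (2 * c + 1) + c) = s (T n (2 * c + 1)) j * s n c := by
  induction j using Nat.twoStepInduction with
  | zero => simp [s]
  | one =>
    have h := s_reflect n c c
    rw [show c + 1 + c = 2 * c + 1 by ring] at h
    rw [show 1 * (2 * c + 1) + c = 2 * c + 1 + c by ring, s]
    linear_combination h
  | more j ih0 ih1 =>
    have h := s_add_two_mul n (2 * c + 1) (j * (2 * c + 1) + c)
    rw [show j * (2 * c + 1) + c + (2 * c + 1) = (j + 1) * (2 * c + 1) + c by ring, ih0, ih1] at h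
    rw [show (j + 2) * (2 * c + 1) + c = j * (2 * c + 1) + c + 2 * (2 * c + 1) by ring, h, s]
    ring

theorem s_factorization_composite_index (a b : ℕ) (ha : Odd a) (hb : Odd b)
    (ha3 : 3 ≤ a) (hb3 : 3 ≤ b) (k : ℕ) (hk : 2 * k + 1 = a * b) (n : ℤ) :
    s n k = s (T n b) ((a - 1) / 2) * s n ((b - 1) / 2) := by
  obtain ⟨j, rfl⟩ := ha
  obtain ⟨c, rfl⟩ := hb
  have hk' : k = j * (2 * c + 1) + c := by linarith
  rw [hk', show (2 * j + 1 - 1) / 2 = j by omega, show (2 * c + 1 - 1) / 2 = c by omega]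
  exact s_mul_add n c j
end

section
/- For every integer n ≥ 2 and all natural numbers j, k, one has gcd(s_j(n), s_k(n)) = s_m(n), where m is the natural number determined by 2m + 1 = gcd(2j + 1, 2k + 1). -/
/-- The identity `s_(c+a) + s_(c-a) = T_a s_c` with `c = i + a`. -/
theorem s_add_s (n : ℤ) (a i : ℕ) : s n (i + 2 * a) + s n i = T n a * s n (i + a) := by
  induction a using Nat.twoStepInduction generalizing i with
  | zero => simp only [T, mul_zero, add_zero]; ring
  | one => simp only [T, s]; ring
  | more a h0 h1 =>
    have e0 := h0 (i + 2)
    have e1 := h1 (i + 1)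
    have e2 : s n (i + 2) = n * s n (i + 1) - s n i := by simp only [s]
    have e3 : s n (i + 2 * (a + 2)) = n * s n (i + 1 + 2 * (a + 1)) - s n (i + 2 + 2 * a) := by
      rw [show i + 2 * (a + 2) = (i + 2 + 2 * a) + 2 by ring,
        show i + 1 + 2 * (a + 1) = (i + 2 + 2 * a) + 1 by ring]
      simp only [s]
    rw [show i + 2 + a = i + (a + 2) by ring] at e0
    rw [show i + 1 + (a + 1) = i + (a + 2) by ring] at e1
    have e4 : T n (a + 2) = n * T n (a + 1) - T n a := by simp only [T]
    rw [e3, e4]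
    linear_combination n * e1 - e0 + e2

theorem s_succ_sub_s (n : ℤ) (b : ℕ) : s n (b + 1) - s n b = T n (b + 1) := by
  induction b using Nat.twoStepInduction with
  | zero => simp only [s, T]; ring
  | one => simp only [s, T]; ring
  | more b h0 h1 =>
    have e : T n (b + 2 + 1) = n * T n (b + 1 + 1) - T n (b + 1) := by simp only [T]
    have e' : s n (b + 2 + 1) = n * s n (b + 2) - s n (b + 1) := by simp only [s]
    have e'' : s n (b + 2) = n * s n (b + 1) - s n b := by simp only [s]
    rw [show b + 1 + 1 = b + 2 by ring] at h1 e
    linear_combination e' - e'' - e + n * h1 - h0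

/-- The identity `s_(k+a) + s_(k-a) = T_a s_k` with `a = k + 1 + b > k`, where
`s_(k-a) = s_(-1-b) = -s_b`. -/
theorem s_sub_s (n : ℤ) (k b : ℕ) :
    s n (2 * k + 1 + b) - s n b = T n (k + 1 + b) * s n k := by
  induction k using Nat.twoStepInduction generalizing b with
  | zero =>
    have h := s_succ_sub_s n b
    rw [show 2 * 0 + 1 + b = b + 1 by ring, h]
    simp only [s, mul_one]
  | one =>
    have h := s_succ_sub_s n (b + 1)
    rw [show 2 * 1 + 1 + b = b + 1 + 2 by ring, show 1 + 1 + b = b + 1 + 1 by ring, ← h]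
    simp only [s]; ring
  | more k h0 h1 =>
    have e0 := h0 (b + 2)
    have e1 := h1 (b + 1)
    have e2 : s n (b + 2) = n * s n (b + 1) - s n b := by simp only [s]
    have e3 : s n (2 * (k + 2) + 1 + b)
        = n * s n (2 * (k + 1) + 1 + (b + 1)) - s n (2 * k + 1 + (b + 2)) := by
      rw [show 2 * (k + 2) + 1 + b = (2 * k + 1 + (b + 2)) + 2 by ring,
        show 2 * (k + 1) + 1 + (b + 1) = (2 * k + 1 + (b + 2)) + 1 by ring]
      simp only [s]
    rw [show k + 1 + (b + 2) = k + 2 + 1 + b by ring] at e0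
    rw [show k + 1 + 1 + (b + 1) = k + 2 + 1 + b by ring] at e1
    have e4 : s n (k + 2) = n * s n (k + 1) - s n k := by simp only [s]
    rw [e3, e4]
    linear_combination n * e1 - e0 - e2

theorem s_nonneg (n : ℤ) (hn : 2 ≤ n) (k : ℕ) : 0 ≤ s n k := by
  -- Monotonicity is carried along, since nonnegativity alone is not inductive.
  have h : 0 ≤ s n k ∧ s n k ≤ s n (k + 1) := by
    induction k with
    | zero => simp only [s]; omega
    | succ k ih =>
      have e : s n (k + 1 + 1) = n * s n (k + 1) - s n k := by simp only [s]
      refine ⟨by linarith, ?_⟩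
      rw [e]
      nlinarith
  exact h.1

/-- The reduction of the first argument modulo the second, up to sign. -/
theorem gcd_step {x y z c : ℤ} (h : x + y = c * z ∨ x - y = c * z) : Int.gcd x z = Int.gcd y z := by
  rcases h with h | h
  · rw [show x = -y + c * z by linarith, Int.gcd_add_mul_right_left, Int.neg_gcd]
  · rw [show x = y + c * z by linarith, Int.gcd_add_mul_right_left]

theorem s_gcd (n : ℤ) (hn : 2 ≤ n) (j k m : ℕ)
    (hm : 2 * m + 1 = Nat.gcd (2 * j + 1) (2 * k + 1)) :
    (Int.gcd (s n j) (s n k) : ℤ) = s n m := by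
  induction hN : j + k using Nat.strong_induction_on generalizing j k with
  | _ N ih =>
    subst hN
    wlog hjk : k ≤ j generalizing j k
    · rw [Int.gcd_comm]
      refine this k j (by rw [hm, Nat.gcd_comm]) (fun M hM j' k' h1 h2 => ?_) (by omega)
      exact ih M (by omega) j' k' h1 h2
    rcases hjk.eq_or_lt with rfl | hlt
    · rw [Nat.gcd_self] at hm
      obtain rfl : m = k := by omega
      rw [Int.gcd_self, Int.natCast_natAbs, abs_of_nonneg (s_nonneg n hn m)]
    rcases le_or_gt j (2 * k) with h | h
    -- The reduced index is `i = 2k - j`.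
    · obtain ⟨a, rfl⟩ := Nat.exists_eq_add_of_lt hlt
      obtain ⟨i, rfl⟩ : ∃ i, k = i + (a + 1) := ⟨k - (a + 1), by omega⟩
      have e := s_add_s n (a + 1) i
      rw [show i + (a + 1) + a + 1 = i + 2 * (a + 1) by ring] at hm ⊢
      rw [gcd_step (Or.inl e)]
      refine ih _ (by omega) i _ ?_ rfl
      rw [hm]
      zify
      rw [← Int.gcd_natCast_natCast, ← Int.gcd_natCast_natCast]
      congr 1
      exact gcd_step (c := 2) (Or.inl (by push_cast; ring))
    -- The reduced index is `b = j - 2k - 1`.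
    · obtain ⟨b, rfl⟩ : ∃ b, j = 2 * k + 1 + b := ⟨j - (2 * k + 1), by omega⟩
      rw [gcd_step (Or.inr (s_sub_s n k b))]
      refine ih _ (by omega) b _ ?_ rfl
      rw [hm]
      zify
      rw [← Int.gcd_natCast_natCast, ← Int.gcd_natCast_natCast]
      congr 1
      exact gcd_step (c := 2) (Or.inr (by push_cast; ring))
end

section
/- Let n ≥ 2 be an integer. (a) If n is even, then s_k(n) is odd for every k ≥ 0. (b) If n is odd, then s_k(n) is even if and only if k ≡ 1 (mod 3). (c) If q is an odd prime with n ≡ 2 (mod q), then q divides s_k(n) if and only if q divides 2k + 1. (d) If q is an odd prime with n ≡ −2 (mod q), then s_k(n) ≡ (−1)^k (mod q) for every k ≥ 0. -/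
theorem s_modEq_of_modEq_two {n m : ℤ} (h : n ≡ 2 [ZMOD m]) (k : ℕ) :
    s n k ≡ 2 * (k : ℤ) + 1 [ZMOD m] := by
  induction k using Nat.twoStepInduction with
  | zero => simp [s]
  | one => simpa [s] using h.add_right 1
  | more k ih₀ ih₁ =>
    have h₂ := (h.mul ih₁).sub ih₀
    rw [s]
    refine h₂.trans (congrArg (· % m) ?_)
    push_cast
    ring

theorem s_modEq_of_modEq_neg_two {n m : ℤ} (h : n ≡ -2 [ZMOD m]) (k : ℕ) :
    s n k ≡ (-1) ^ k [ZMOD m] := by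
  induction k using Nat.twoStepInduction with
  | zero => simp [s]
  | one => simpa [s] using h.add_right 1
  | more k ih₀ ih₁ =>
    have h₂ := (h.mul ih₁).sub ih₀
    rw [s]
    refine h₂.trans (congrArg (· % m) ?_)
    ring

/-- For odd `n`, the parity is periodic: the recurrence gives
`s_{k+3} ≡ s_{k+2} + s_{k+1} ≡ 2 s_{k+1} + s_k` modulo `2`. -/
theorem even_s_add_three {n : ℤ} (h : Odd n) (k : ℕ) : Even (s n (k + 3)) ↔ Even (s n k) := by
  have hn : ¬ Even n := Int.not_even_iff_odd.mpr h
  have h₃ : s n (k + 3) = n * s n (k + 2) - s n (k + 1) := by rw [s]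
  have h₂ : s n (k + 2) = n * s n (k + 1) - s n k := by rw [s]
  rw [h₃, h₂]
  simp only [Int.even_sub, Int.even_mul, hn, false_or]
  tauto

theorem even_s_iff_of_odd {n : ℤ} (h : Odd n) : ∀ k : ℕ, Even (s n k) ↔ k % 3 = 1
  | 0 => by simp [s]
  | 1 => by simpa [s] using h.add_one
  | 2 => by simp [s, h]
  | k + 3 => by
    rw [even_s_add_three h, even_s_iff_of_odd h k, Nat.add_mod_right]

theorem s_parity_and_prime_divisors (n : ℤ) (hn : 2 ≤ n) :
    (Even n → ∀ k : ℕ, Odd (s n k)) ∧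
    (Odd n → ∀ k : ℕ, (Even (s n k) ↔ k % 3 = 1)) ∧
    (∀ q : ℕ, q.Prime → Odd q → n ≡ 2 [ZMOD (q : ℤ)] →
      ∀ k : ℕ, ((q : ℤ) ∣ s n k ↔ (q : ℤ) ∣ 2 * (k : ℤ) + 1)) ∧
    (∀ q : ℕ, q.Prime → Odd q → n ≡ -2 [ZMOD (q : ℤ)] →
      ∀ k : ℕ, s n k ≡ (-1) ^ k [ZMOD (q : ℤ)]) := by
  refine ⟨fun he k => ?_, fun ho k => even_s_iff_of_odd ho k, fun q _ _ h k => ?_,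
    fun q _ _ h k => s_modEq_of_modEq_neg_two h k⟩
  · have h₂ : n ≡ 2 [ZMOD 2] := by
      rw [Int.ModEq, Int.even_iff.mp he, Int.emod_self]
    have hs := s_modEq_of_modEq_two h₂ k
    rw [Int.odd_iff, hs]
    omega
  · exact (s_modEq_of_modEq_two h k).dvd_iff
end

section
/- For every integer n and every j ≥ 0, s_{2j}(n) + 1 = s_j(n) · T_j(n) and s_{2j+1}(n) − 1 = s_j(n) · T_{j+1}(n). -/
/-- The product rule `s_m T_b = s_{m+b} + s_{m-b}` for `m = a + b`. -/
theorem mul_T (n : ℤ) (a b : ℕ) : s n (a + b) * T n b = s n (a + 2 * b) + s n a := by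
  induction b using Nat.twoStepInduction generalizing a with
  | zero => simp only [T, Nat.mul_zero, Nat.add_zero]; ring
  | one => simp only [T, Nat.mul_one, s]; ring
  | more b ih₀ ih₁ =>
    -- The index `a + b + 2` is split as `(a + 2) + b` and as `(a + 1) + (b + 1)`.
    have h₀ := ih₀ (a + 2)
    have h₁ := ih₁ (a + 1)
    rw [show a + 2 + b = a + (b + 2) by ring, show a + 2 + 2 * b = a + 2 * b + 2 by ring] at h₀
    rw [show a + 1 + (b + 1) = a + (b + 2) by ring,
      show a + 1 + 2 * (b + 1) = a + 2 * b + 3 by ring] at h₁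
    rw [show a + 2 * (b + 2) = a + 2 * b + 4 by ring]
    have hs : s n (a + 2 * b + 4) = n * s n (a + 2 * b + 3) - s n (a + 2 * b + 2) := rfl
    have ha : s n (a + 2) = n * s n (a + 1) - s n a := rfl
    have hT : T n (b + 2) = n * T n (b + 1) - T n b := rfl
    rw [hs, hT]
    linear_combination n * h₁ - h₀ - ha

theorem s_plus_minus_one_factorizations (n : ℤ) (j : ℕ) :
    s n (2 * j) + 1 = s n j * T n j ∧ s n (2 * j + 1) - 1 = s n j * T n (j + 1) := by
  have diag (k : ℕ) : s n (2 * k) + 1 = s n k * T n k := by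
    have h := mul_T n 0 k
    simp only [Nat.zero_add] at h
    exact h.symm
  refine ⟨diag j, ?_⟩
  cases j with
  | zero => simp [s, T]
  | succ k =>
    have h₀ := mul_T n 1 k
    have h₁ := diag (k + 1)
    rw [show 1 + k = k + 1 by ring, show 1 + 2 * k = 2 * k + 1 by ring] at h₀
    rw [show 2 * (k + 1) = 2 * k + 2 by ring] at h₁ ⊢
    have hs : s n (2 * k + 2 + 1) = n * s n (2 * k + 2) - s n (2 * k + 1) := rfl
    have hT : T n (k + 1 + 1) = n * T n (k + 1) - T n k := rfl
    have h_one : s n 1 = n + 1 := rfl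
    rw [hs, hT]
    linear_combination n * h₁ + h₀ + h_one
end

section
/- For every integer n, one has s_{2j}(n) − 1 = (n + 2) · r_j(n) · U_{j−1}(n) for every j ≥ 1, and s_{2j+1}(n) + 1 = (n + 2) · r_j(n) · U_j(n) for every j ≥ 0. -/
/-- The Cassini-type invariant of the recurrence for `U`; it supplies the constant `1`
in the induction step of `s_pair`. -/
lemma U_invariant (n : ℤ) (j : ℕ) :
    U n j ^ 2 - n * U n j * U n (j + 1) + U n (j + 1) ^ 2 = 1 := by
  induction j with
  | zero => simp only [U]; ring
  | succ k ih =>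
    simp only [U]
    linear_combination ih

/-- Expresses `r` through `U`. The first identity is `r_j = U_j - U_{j-1}` with `U_{j-1}`
rewritten as `n U_j - U_{j+1}`, so that it also makes sense at `j = 0`. -/
lemma r_eq (n : ℤ) (j : ℕ) :
    r n j = U n j + U n (j + 1) - n * U n j ∧ r n (j + 1) = U n (j + 1) - U n j := by
  induction j with
  | zero => simp [r, U]
  | succ k ih =>
    obtain ⟨h₀, h₁⟩ := ih
    simp only [r, U]
    constructor
    · linear_combination h₁
    · linear_combination n * h₁ - h₀

/-- Both factorizations, with the even one shifted to index `2j + 2` so that they can be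
proved by a joint induction starting at `j = 0`. -/
lemma s_pair (n : ℤ) (j : ℕ) :
    s n (2 * j + 1) + 1 = (n + 2) * r n j * U n j ∧
    s n (2 * j + 2) - 1 = (n + 2) * r n (j + 1) * U n j := by
  induction j with
  | zero => constructor <;> simp only [s, r, U] <;> ring
  | succ k ih =>
    obtain ⟨h₁, h₂⟩ := ih
    have hU := U_invariant n k
    obtain ⟨r₀, r₁⟩ := r_eq n k
    have r₂ := (r_eq n (k + 1)).2
    have e₃ : s n (2 * (k + 1) + 1) = n * s n (2 * k + 2) - s n (2 * k + 1) := rfl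
    have e₄ : s n (2 * (k + 1) + 2) = n * s n (2 * (k + 1) + 1) - s n (2 * k + 2) := rfl
    have u₂ : U n (k + 1 + 1) = n * U n (k + 1) - U n k := rfl
    rw [u₂] at r₂
    rw [r₀] at h₁
    rw [r₁] at h₂
    have h₃ : s n (2 * (k + 1) + 1) + 1 = (n + 2) * r n (k + 1) * U n (k + 1) := by
      rw [r₁]
      linear_combination e₃ + n * h₂ - h₁ - (n + 2) * hU
    refine ⟨h₃, ?_⟩
    rw [r₁] at h₃
    rw [r₂]
    linear_combination e₄ + n * h₃ - h₂ + (n + 2) * hU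

theorem s_minus_plus_one_factorizations (n : ℤ) :
    (∀ j : ℕ, 1 ≤ j → s n (2 * j) - 1 = (n + 2) * r n j * U n (j - 1)) ∧
    (∀ j : ℕ, s n (2 * j + 1) + 1 = (n + 2) * r n j * U n j) := by
  refine ⟨fun j hj => ?_, fun j => (s_pair n j).1⟩
  obtain ⟨k, rfl⟩ := Nat.exists_eq_add_of_le' hj
  exact (s_pair n k).2
end
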